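/- For every integer r ≥ 0, the identity ∑_{t=0}^{r} ((y; x^{−1})_t · (x^{r}; x^{−1})_t / (x^{−1}; x^{−1})_t) · x^{−t} = y^{r} holds in K. -/

import Mathlib

/-- `K = ℚ(x, y)`, the field of rational functions in two independent
indeterminates over `ℚ`. -/
noncomputable abbrev K : Type := FractionRing (MvPolynomial (Fin 2) ℚ)

/-- The indeterminate `x` viewed inside `K`. -/
noncomputable def X : K := algebraMap (MvPolynomial (Fin 2) ℚ) K (MvPolynomial.X 0)

/-- The indeterminate `y` viewed inside `K`. -/
noncomputable def Y : K := algebraMap (MvPolynomial (Fin 2) ℚ) K (MvPolynomial.X 1)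

/-- The `q`-Pochhammer symbol `(a; q)_t = ∏_{i=1}^{t} (1 − a q^{i−1})`,
with `(a; q)_0 = 1`. -/
noncomputable def qPoch (a q : K) (t : ℕ) : K :=
  ∏ i ∈ Finset.Icc 1 t, (1 - a * q ^ (i - 1))

theorem qPoch_zero' (a q : K) : qPoch a q 0 = 1 := by simp [qPoch]

theorem qPoch_succ' (a q : K) (t : ℕ) :
    qPoch a q (t + 1) = qPoch a q t * (1 - a * q ^ t) := by
  unfold qPoch
  rw [Finset.prod_Icc_succ_top (by omega)]
  simp

theorem qPoch_left' (a q : K) (t : ℕ) :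
    qPoch a q (t + 1) = (1 - a) * qPoch (a * q) q t := by
  induction t with
  | zero => simp [qPoch]
  | succ n ih =>
    rw [qPoch_succ', ih, qPoch_succ' (a * q)]
    ring

theorem X_ne' : X ≠ 0 := by
  unfold X
  rw [Ne, FaithfulSMul.algebraMap_eq_zero_iff]
  exact MvPolynomial.X_ne_zero 0

theorem X_pow_ne' (n : ℕ) : X ^ (n + 1) ≠ 1 := by
  unfold X
  rw [← map_pow, ← map_one (algebraMap (MvPolynomial (Fin 2) ℚ) K)]
  intro h
  have h2 := FaithfulSMul.algebraMap_injective _ _ h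
  have h3 := congrArg (MvPolynomial.eval (fun _ => (0 : ℚ))) h2
  simp at h3

theorem den_ne' (t : ℕ) : qPoch X⁻¹ X⁻¹ t ≠ 0 := by
  unfold qPoch
  rw [Finset.prod_ne_zero_iff]
  intro i hi h
  have hi1 := (Finset.mem_Icc.mp hi).1
  obtain ⟨k, rfl⟩ : ∃ k, i = k + 1 := ⟨i - 1, by omega⟩
  rw [Nat.add_sub_cancel, ← pow_succ', sub_eq_zero, inv_pow] at h
  exact X_pow_ne' k (inv_eq_one.mp h.symm)

theorem top_zero' (r : ℕ) : qPoch (X ^ r) X⁻¹ (r + 1) = 0 := by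
  rw [qPoch_succ', inv_pow, mul_inv_cancel₀ (pow_ne_zero _ X_ne')]
  simp

theorem step' (r t : ℕ) :
    qPoch (X ^ (r + 1)) X⁻¹ (t + 1) / qPoch X⁻¹ X⁻¹ (t + 1) * X⁻¹ ^ (t + 1)
      = qPoch (X ^ r) X⁻¹ (t + 1) / qPoch X⁻¹ X⁻¹ (t + 1)
        - qPoch (X ^ r) X⁻¹ t / qPoch X⁻¹ X⁻¹ t := by
  have h0 := den_ne' t
  have h1 := den_ne' (t + 1)
  have hx := X_ne'
  have e : X ^ (r + 1) * X⁻¹ = X ^ r := by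
    rw [pow_succ, mul_assoc, mul_inv_cancel₀ hx, mul_one]
  rw [div_sub_div _ _ h1 h0, div_mul_eq_mul_div, div_eq_div_iff h1 (mul_ne_zero h1 h0),
    qPoch_left' (X ^ (r + 1)), e, qPoch_succ' (X ^ r), qPoch_succ' X⁻¹, ← e]
  ring

/-- For every integer `r ≥ 0`,
`∑_{t=0}^{r} ((y; x^{−1})_t · (x^{r}; x^{−1})_t / (x^{−1}; x^{−1})_t) · x^{−t} = y^{r}`
in `K`. -/
theorem qChuVandermonde_special (r : ℕ) :
    ∑ t ∈ Finset.range (r + 1),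
      (qPoch Y X⁻¹ t * qPoch (X ^ r) X⁻¹ t / qPoch X⁻¹ X⁻¹ t) * (X⁻¹) ^ t
      = Y ^ r := by
  induction r with
  | zero => simp [qPoch]
  | succ r ih =>
    rw [pow_succ Y, ← ih, Finset.sum_mul, Finset.sum_range_succ']
    have tel := Finset.sum_range_sub (fun t => qPoch Y X⁻¹ t *
      (qPoch (X ^ r) X⁻¹ t / qPoch X⁻¹ X⁻¹ t)) (r + 1)
    simp only [top_zero', qPoch_zero', zero_div, mul_zero, div_one, mul_one, zero_sub] at tel
    simp only [qPoch_zero', div_one, mul_one, pow_zero]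
    rw [← sub_eq_zero, add_sub_right_comm, ← Finset.sum_sub_distrib, add_eq_zero_iff_eq_neg, ← tel]
    refine Finset.sum_congr rfl fun t _ => ?_
    rw [mul_div_assoc, mul_assoc, step', qPoch_succ' Y]
    ring
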